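/- arXiv:1912.01283 — 2 statements merged into one kernel-verified Lean document; each statement's English description precedes it below -/
import Mathlib

section
/- Let Ω ⊂ ℝ^N (N ≥ 3) be a bounded open set with C² boundary. Let a ≥ 2 and let α, α* be reals with 0 < α − 1/2 < α* ≤ α; set λ := 2(α* − α) + 1 (so λ ∈ (0,1]). Let Φ : Ω → (0,∞) and G : {(x,y) ∈ Ω × Ω : x ≠ y} → (0,∞) be Borel measurable and assume there exist c₀ ≥ 1 and β₁ > 0 such that for every β ∈ (0,β₁), every x ∈ Σ_β and every y ∈ Ω with |x−y| ≥ aβ: Φ(x) G(x,y) ≤ c₀ β^{2α*} |x−y|^{2−N−2α} Φ(y). Then there exist C > 0 and β₂ ∈ (0,β₁] such that for every positive Borel measure τ on Ω with ∫_Ω Φ dτ < ∞ and every β ∈ (0,β₂): β^{−λ} ∫_{Σ_β} Φ(x) (∫_Ω G(x,y) 𝟙_{|x−y| ≥ aβ} dτ(y)) dH^{N−1}(x) ≤ C ∫_Ω Φ dτ. -/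
open MeasureTheory Metric Set

/-- `Ω` has `C²` boundary: near each boundary point, `Ω` coincides with the strict
sublevel set of a `C²` function with nonvanishing derivative. -/
def HasC2Boundary {N : ℕ} (Ω : Set (EuclideanSpace ℝ (Fin N))) : Prop :=
  ∀ p ∈ frontier Ω, ∃ (U : Set (EuclideanSpace ℝ (Fin N)))
    (f : EuclideanSpace ℝ (Fin N) → ℝ),
    IsOpen U ∧ p ∈ U ∧ ContDiffOn ℝ 2 f U ∧ (∀ x ∈ U, fderiv ℝ f x ≠ 0) ∧
    Ω ∩ U = {x ∈ U | f x < 0}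

open scoped ENNReal NNReal

/-- A map with a Lipschitz inverse on `S` does not decrease Hausdorff measure by more than
the power of the Lipschitz constant. -/
lemma hausdorffMeasure_le_of_dist_le_mul {X Y : Type*} [MetricSpace X] [MeasurableSpace X]
    [BorelSpace X] [MetricSpace Y] [MeasurableSpace Y] [BorelSpace Y] {P : X → Y} {S : Set X}
    {K : ℝ≥0} (hP : ∀ x ∈ S, ∀ x' ∈ S, dist x x' ≤ K * dist (P x) (P x')) {d : ℝ} (hd : 0 ≤ d) :
    μH[d] S ≤ (K : ℝ≥0∞) ^ d * μH[d] (P '' S) := by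
  rcases S.eq_empty_or_nonempty with rfl | ⟨x₀, hx₀⟩
  · simp
  have : Nonempty X := ⟨x₀⟩
  have hinj : InjOn P S := fun x hx x' hx' h => by
    have := hP x hx x' hx'
    rw [h, dist_self, mul_zero] at this
    exact dist_le_zero.1 this
  have himg : Function.invFunOn P S '' (P '' S) = S := hinj.invFunOn_image Subset.rfl
  have hlip : LipschitzOnWith K (Function.invFunOn P S) (P '' S) := by
    refine LipschitzOnWith.of_dist_le_mul ?_
    rintro _ ⟨x, hx, rfl⟩ _ ⟨x', hx', rfl⟩
    rw [hinj.leftInvOn_invFunOn hx, hinj.leftInvOn_invFunOn hx']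
    exact hP x hx x' hx'
  simpa only [himg] using hlip.hausdorffMeasure_image_le hd

/-- A vector almost orthogonal to `g` is controlled by its projection to the hyperplane `gᗮ`. -/
lemma norm_le_two_mul_norm_orthogonalProjectionOnto {E : Type*} [NormedAddCommGroup E]
    [InnerProductSpace ℝ E] {g v : E} (hg : g ≠ 0) (h : |inner ℝ g v| ≤ ‖g‖ / 2 * ‖v‖) :
    ‖v‖ ≤ 2 * ‖(ℝ ∙ g)ᗮ.orthogonalProjectionOnto v‖ := by
  have hg' : 0 < ‖g‖ := norm_pos_iff.2 hg
  have h1 := Submodule.norm_sq_eq_add_norm_sq_projection v (ℝ ∙ g)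
  have h2 : ‖(ℝ ∙ g).orthogonalProjectionOnto v‖ ≤ ‖v‖ / 2 := by
    have : ‖(ℝ ∙ g).orthogonalProjectionOnto v‖ = ‖(ℝ ∙ g).starProjection v‖ := rfl
    rw [this, Submodule.starProjection_singleton, norm_smul, norm_div, Real.norm_eq_abs]
    simp only [RCLike.ofReal_real_eq_id, id, norm_pow, norm_norm]
    calc |inner ℝ g v| / ‖g‖ ^ 2 * ‖g‖ ≤ (‖g‖ / 2 * ‖v‖) / ‖g‖ ^ 2 * ‖g‖ := by gcongr
      _ = ‖v‖ / 2 := by field_simp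
  have h3 := pow_le_pow_left₀ (norm_nonneg _) h2 2
  refine le_of_sq_le_sq ?_ (by positivity)
  nlinarith [sq_nonneg ‖v‖]

/-- A set all of whose secants are almost orthogonal to a fixed vector has Hausdorff measure
of codimension one growing at most like that of a hyperplane. -/
lemma exists_hausdorffMeasure_inter_closedBall_le_of_secants {E : Type*} [NormedAddCommGroup E]
    [InnerProductSpace ℝ E] [FiniteDimensional ℝ E] [MeasurableSpace E] [BorelSpace E] {n : ℕ}
    (hn : Module.finrank ℝ E = n + 1) {g : E} (hg : g ≠ 0) :
    ∃ C : ℝ≥0, ∀ S : Set E,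
      (∀ x ∈ S, ∀ x' ∈ S, |inner ℝ g (x - x')| ≤ ‖g‖ / 2 * ‖x - x'‖) →
      ∀ y : E, ∀ r : ℝ, 0 ≤ r →
        μH[(n : ℝ)] (S ∩ closedBall y r) ≤ C * ENNReal.ofReal (r ^ n) := by
  have : Fact (Module.finrank ℝ E = n + 1) := ⟨hn⟩
  have hfr : Module.finrank ℝ (ℝ ∙ g)ᗮ = n := Submodule.finrank_orthogonal_span_singleton hg
  have hH : (μH[(n : ℝ)] : Measure (ℝ ∙ g)ᗮ).IsAddHaarMeasure := by
    have := isAddHaarMeasure_hausdorffMeasure (E := (ℝ ∙ g)ᗮ)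
    rwa [hfr] at this
  set B : ℝ≥0∞ := (μH[(n : ℝ)] : Measure (ℝ ∙ g)ᗮ) (ball 0 1) with hB
  have hBtop : B ≠ ∞ := measure_ball_lt_top.ne
  refine ⟨2 ^ n * B.toNNReal, fun S hS y r hr => ?_⟩
  let P := (ℝ ∙ g)ᗮ.orthogonalProjectionOnto
  have h1 : μH[(n : ℝ)] (S ∩ closedBall y r) ≤
      ((2 : ℝ≥0) : ℝ≥0∞) ^ (n : ℝ) * μH[(n : ℝ)] (P '' (S ∩ closedBall y r)) := by
    refine hausdorffMeasure_le_of_dist_le_mul (fun x hx x' hx' => ?_) n.cast_nonneg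
    rw [dist_eq_norm, dist_eq_norm, ← map_sub]
    exact norm_le_two_mul_norm_orthogonalProjectionOnto hg (hS x hx.1 x' hx'.1)
  have h2 : P '' (S ∩ closedBall y r) ⊆ closedBall (P y) r := by
    rintro _ ⟨x, hx, rfl⟩
    have hx2 := hx.2
    rw [mem_closedBall, dist_eq_norm] at hx2 ⊢
    rw [← map_sub]
    exact (Submodule.norm_orthogonalProjectionOnto_apply_le _ _).trans hx2
  calc _ ≤ _ := h1
    _ ≤ ((2 : ℝ≥0) : ℝ≥0∞) ^ (n : ℝ) * μH[(n : ℝ)] (closedBall (P y) r) := by gcongr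
    _ = _ := by
      rw [Measure.addHaar_closedBall _ _ hr, hfr, ← hB, ENNReal.rpow_natCast, ENNReal.coe_mul,
        ENNReal.coe_toNNReal hBtop, ENNReal.coe_pow]
      ring

/-- The open ball around a point of an open set that reaches up to its frontier stays inside. -/
lemma ball_infDist_frontier_subset {E : Type*} [NormedAddCommGroup E] [NormedSpace ℝ E]
    {Ω : Set E} (hΩ : IsOpen Ω) {x : E} (hx : x ∈ Ω) :
    ball x (infDist x (frontier Ω)) ⊆ Ω := by
  rcases le_or_gt (infDist x (frontier Ω)) 0 with h | h
  · rw [ball_eq_empty.2 h]; exact empty_subset _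
  refine (convex_ball x _).isPreconnected.subset_of_closure_inter_subset hΩ
    ⟨x, mem_ball_self h, hx⟩ ?_
  rintro z ⟨hz, hzb⟩
  by_contra hzΩ
  have hzf : z ∈ frontier Ω := by rw [hΩ.frontier_eq]; exact ⟨hz, hzΩ⟩
  have := infDist_le_dist_of_mem (x := x) hzf
  rw [mem_ball, dist_comm] at hzb
  linarith

/-- Secants of a level set of the distance to the frontier, near a point at which `Ω` is the
sublevel set of `f`, avoid the cone of directions in which `f` decreases. -/
lemma secant_ge_of_infDist_frontier_eq {E : Type*} [NormedAddCommGroup E] [NormedSpace ℝ E]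
    {Ω U : Set E} (hΩ : IsOpen Ω) {f : E → ℝ} {A : E →L[ℝ] ℝ} {ε : ℝ≥0} (hU : IsOpen U)
    (hfU : ContinuousOn f U) (hΩU : Ω ∩ U = {x ∈ U | f x < 0})
    (hA : ApproximatesLinearOn f A U ε) {x x' q : E} (hx : x ∈ Ω) (hq : q ∈ frontier Ω)
    (hβ : 0 < infDist x (frontier Ω)) (hqx : dist x' q = infDist x (frontier Ω))
    (hqU : q ∈ U) (hqU' : q - (x' - x) ∈ U) :
    -(ε * ‖x' - x‖) ≤ A (x' - x) := by
  set v := x' - x with hv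
  have hcl : q - v ∈ closure Ω := by
    refine closure_mono (ball_infDist_frontier_subset hΩ hx) ?_
    rw [closure_ball x hβ.ne', mem_closedBall, ← hqx, dist_comm x', dist_eq_norm, dist_eq_norm]
    apply le_of_eq
    congr 1
    rw [hv]; abel
  have hfle : f (q - v) ≤ 0 := by
    have hcl' : q - v ∈ closure (Ω ∩ U) := by
      rw [inter_comm]; exact hU.inter_closure ⟨hqU', hcl⟩
    have hmaps : MapsTo f (Ω ∩ U) (Iic 0) := fun z hz => by
      rw [hΩU] at hz; exact hz.2.le
    have := (hfU.continuousAt (hU.mem_nhds hqU')).continuousWithinAt.mem_closure hcl' hmaps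
    simpa using this
  have hfge : 0 ≤ f q := by
    by_contra! h
    have : q ∈ Ω ∩ U := by rw [hΩU]; exact ⟨hqU, h⟩
    rw [hΩ.frontier_eq] at hq
    exact hq.2 this.1
  have := hA q hqU (q - v) hqU'
  rw [sub_sub_cancel, Real.norm_eq_abs] at this
  have := (abs_le.1 this).2
  linarith

/-- The level sets `{δ = β}` of the distance to the `C²` boundary are, for small `β`,
upper Ahlfors regular of dimension `N - 1`, uniformly in `β`. -/
lemma exists_hausdorffMeasure_level_inter_closedBall_le {n : ℕ}
    {Ω : Set (EuclideanSpace ℝ (Fin (n + 1)))} (hΩo : IsOpen Ω)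
    (hΩb : Bornology.IsBounded Ω) (hΩ2 : HasC2Boundary Ω) :
    ∃ C : ℝ≥0, ∃ ρ : ℝ, 0 < ρ ∧ ∀ β ∈ Ioo 0 ρ, ∀ y : EuclideanSpace ℝ (Fin (n + 1)), ∀ r : ℝ,
      0 ≤ r → μH[(n : ℝ)] ({x ∈ Ω | infDist x (frontier Ω) = β} ∩ closedBall y r) ≤
        C * ENNReal.ofReal (r ^ n) := by
  have hcomp : IsCompact (frontier Ω) :=
    isCompact_of_isClosed_isBounded isClosed_frontier (hΩb.closure.subset frontier_subset_closure)
  have key : ∃ C : ℝ≥0, ∃ ρ : ℝ, 0 < ρ ∧ ∀ β ∈ Ioo 0 ρ,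
      ∀ y : EuclideanSpace ℝ (Fin (n + 1)), ∀ r : ℝ, 0 ≤ r →
      μH[(n : ℝ)] ({x ∈ Ω | infDist x (frontier Ω) = β ∧
        ∃ q ∈ frontier Ω, q ∈ frontier Ω ∧ dist x q = β} ∩ closedBall y r) ≤
        C * ENNReal.ofReal (r ^ n) := by
    refine hcomp.induction_on (p := fun s => ∃ C : ℝ≥0, ∃ ρ : ℝ, 0 < ρ ∧ ∀ β ∈ Ioo 0 ρ,
      ∀ y : EuclideanSpace ℝ (Fin (n + 1)), ∀ r : ℝ, 0 ≤ r →
      μH[(n : ℝ)] ({x ∈ Ω | infDist x (frontier Ω) = β ∧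
        ∃ q ∈ s, q ∈ frontier Ω ∧ dist x q = β} ∩ closedBall y r) ≤
        C * ENNReal.ofReal (r ^ n)) ?_ ?_ ?_ ?_
    · exact ⟨0, 1, one_pos, fun β _ y r _ => by simp⟩
    · rintro s t hst ⟨C, ρ, hρ, h⟩
      refine ⟨C, ρ, hρ, fun β hβ y r hr => (measure_mono ?_).trans (h β hβ y r hr)⟩
      rintro x ⟨⟨hx, hxβ, q, hq, hq'⟩, hxy⟩
      exact ⟨⟨hx, hxβ, q, hst hq, hq'⟩, hxy⟩
    · rintro s t ⟨C, ρ, hρ, h⟩ ⟨C', ρ', hρ', h'⟩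
      refine ⟨C + C', min ρ ρ', lt_min hρ hρ', fun β hβ y r hr => ?_⟩
      have e1 := h β ⟨hβ.1, hβ.2.trans_le (min_le_left _ _)⟩ y r hr
      have e2 := h' β ⟨hβ.1, hβ.2.trans_le (min_le_right _ _)⟩ y r hr
      rw [ENNReal.coe_add, add_mul]
      refine le_trans (measure_mono ?_) ((measure_union_le _ _).trans (add_le_add e1 e2))
      rintro x ⟨⟨hx, hxβ, q, hq | hq, hq'⟩, hxy⟩
      · exact Or.inl ⟨⟨hx, hxβ, q, hq, hq'⟩, hxy⟩
      · exact Or.inr ⟨⟨hx, hxβ, q, hq, hq'⟩, hxy⟩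
    · intro p hp
      obtain ⟨U, f, hUo, hpU, hf, hdf, hΩU⟩ := hΩ2 p hp
      set A := fderiv ℝ f p with hA
      have hA0 : A ≠ 0 := hdf p hpU
      have hstrict : HasStrictFDerivAt f A p :=
        (hf.contDiffAt (hUo.mem_nhds hpU)).hasStrictFDerivAt (by norm_num)
      have hεpos : 0 < ‖A‖₊ / 2 := by
        have : 0 < ‖A‖₊ := nnnorm_pos.2 hA0
        positivity
      obtain ⟨V, hV, hAV⟩ := hstrict.approximates_deriv_on_nhds (Or.inr hεpos)
      obtain ⟨η, hη, hball⟩ := Metric.mem_nhds_iff.1 (Filter.inter_mem hV (hUo.mem_nhds hpU))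
      set g := (InnerProductSpace.toDual ℝ (EuclideanSpace ℝ (Fin (n + 1)))).symm A with hgdef
      have hinner : ∀ v, inner ℝ g v = A v := fun v => InnerProductSpace.toDual_symm_apply
      have hgn : ‖g‖ = ‖A‖ := LinearIsometryEquiv.norm_map _ _
      have hg0 : g ≠ 0 := by rw [← norm_ne_zero_iff, hgn]; exact norm_ne_zero_iff.2 hA0
      obtain ⟨C, hC⟩ := exists_hausdorffMeasure_inter_closedBall_le_of_secants
        (E := EuclideanSpace ℝ (Fin (n + 1))) (n := n) (by simp) hg0
      refine ⟨ball p (η / 8), mem_nhdsWithin_of_mem_nhds (ball_mem_nhds p (by positivity)),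
        C, η / 8, by positivity, fun β hβ y r hr => hC _ ?_ y r hr⟩
      have half : ∀ x ∈ Ω, infDist x (frontier Ω) = β → ∀ q ∈ ball p (η / 8), dist x q = β →
          ∀ x' q', q' ∈ ball p (η / 8) → q' ∈ frontier Ω → dist x' q' = β →
          -(‖A‖ / 2 * ‖x' - x‖) ≤ A (x' - x) := by
        intro x hx hxβ q hq hqx x' q' hq' hqf' hqx'
        have hin := subset_inter_iff.1 hball
        refine secant_ge_of_infDist_frontier_eq (ε := ‖A‖₊ / 2) (U := ball p η) hΩo isOpen_ball
          (hf.continuousOn.mono hin.2) ?_ (hAV.mono_set hin.1) hx hqf' (hxβ ▸ hβ.1)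
          (hqx'.trans hxβ.symm) (ball_subset_ball (by linarith) hq') ?_
        · ext z
          constructor
          · rintro ⟨hz, hzb⟩
            have : z ∈ Ω ∩ U := ⟨hz, hin.2 hzb⟩
            rw [hΩU] at this
            exact ⟨hzb, this.2⟩
          · rintro ⟨hzb, hz⟩
            have : z ∈ {x ∈ U | f x < 0} := ⟨hin.2 hzb, hz⟩
            rw [← hΩU] at this
            exact ⟨this.1, hzb⟩
        · have h1 : dist (q' - (x' - x)) x = β := by
            rw [← hqx', dist_comm x', dist_eq_norm, dist_eq_norm]; congr 1; abel
          rw [mem_ball] at hq ⊢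
          have := dist_triangle4 (q' - (x' - x)) x q p
          linarith [hβ.2]
      rintro x ⟨hx, hxβ, q, hq, hqf, hqx⟩ x' ⟨hx', hxβ', q', hq', hqf', hqx'⟩
      rw [hinner, hgn, abs_le]
      refine ⟨half x' hx' hxβ' q' hq' hqx' x q hq hqf hqx, ?_⟩
      have := half x hx hxβ q hq hqx x' q' hq' hqf' hqx'
      rw [← neg_sub x x', map_neg, norm_neg] at this
      linarith
  obtain ⟨C, ρ, hρ, h⟩ := key
  refine ⟨C, ρ, hρ, fun β hβ y r hr => (measure_mono ?_).trans (h β hβ y r hr)⟩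
  rintro x ⟨⟨hx, hxβ⟩, hxy⟩
  have hne : (frontier Ω).Nonempty := by
    by_contra hne
    rw [not_nonempty_iff_eq_empty.1 hne, infDist_empty] at hxβ
    exact hβ.1.ne hxβ
  obtain ⟨q, hq, hqd⟩ := hcomp.exists_infDist_eq_dist hne x
  exact ⟨⟨hx, hxβ, q, hq, hq, hqd.symm.trans hxβ⟩, hxy⟩

/-- Tail integrals of `dist ^ (-s)` against a measure of growth at most `C r ^ n`, `n < s`. -/
lemma exists_setLIntegral_dist_rpow_le {X : Type*} [PseudoMetricSpace X] [MeasurableSpace X]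
    [OpensMeasurableSpace X] (n : ℕ) {s : ℝ} (hs : n < s) (C : ℝ≥0) :
    ∃ C' : ℝ≥0, ∀ (μ : Measure X) (y : X),
      (∀ r : ℝ, 0 ≤ r → μ (closedBall y r) ≤ C * ENNReal.ofReal (r ^ n)) →
      ∀ R : ℝ, 0 < R →
        ∫⁻ x, {x | R ≤ dist x y}.indicator (fun x => ENNReal.ofReal (dist x y ^ (-s))) x ∂μ ≤
          C' * ENNReal.ofReal (R ^ (n - s)) := by
  set q : ℝ≥0∞ := ENNReal.ofReal (2 ^ ((n : ℝ) - s)) with hq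
  have hq1 : q < 1 := by
    rw [hq, ENNReal.ofReal_lt_one]
    exact Real.rpow_lt_one_of_one_lt_of_neg one_lt_two (by linarith)
  have hfin : (1 - q)⁻¹ ≠ ∞ := ENNReal.inv_ne_top.2 (tsub_pos_of_lt hq1).ne'
  refine ⟨C * 2 ^ n * (1 - q)⁻¹.toNNReal, fun μ y hμ R hR => ?_⟩
  have hpt : ∀ x, {x | R ≤ dist x y}.indicator (fun x => ENNReal.ofReal (dist x y ^ (-s))) x ≤
      ∑' k : ℕ, (closedBall y (2 ^ (k + 1) * R)).indicator
        (fun _ => ENNReal.ofReal ((2 ^ k * R) ^ (-s))) x := by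
    intro x
    by_cases hx : R ≤ dist x y
    · obtain ⟨k, hk1, hk2⟩ := exists_nat_pow_near ((one_le_div hR).2 hx) one_lt_two
      rw [le_div_iff₀ hR] at hk1
      rw [div_lt_iff₀ hR] at hk2
      refine le_trans ?_ (ENNReal.le_tsum k)
      rw [indicator_of_mem (show x ∈ {x | R ≤ dist x y} from hx),
        indicator_of_mem (show x ∈ closedBall y (2 ^ (k + 1) * R) from hk2.le)]
      refine ENNReal.ofReal_le_ofReal
        (Real.rpow_le_rpow_of_nonpos (by positivity) hk1 ?_)
      linarith [n.cast_nonneg (α := ℝ)]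
    · rw [indicator_of_notMem (show x ∉ {x | R ≤ dist x y} from hx)]
      exact zero_le
  calc _ ≤ _ := lintegral_mono hpt
    _ = ∑' k : ℕ, ENNReal.ofReal ((2 ^ k * R) ^ (-s)) * μ (closedBall y (2 ^ (k + 1) * R)) := by
      rw [lintegral_tsum fun k => (measurable_const.indicator measurableSet_closedBall).aemeasurable]
      simp_rw [lintegral_indicator_const measurableSet_closedBall]
    _ ≤ ∑' k : ℕ, (C * 2 ^ n * ENNReal.ofReal (R ^ (n - s))) * q ^ k := by
      refine ENNReal.tsum_le_tsum fun k => ?_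
      calc _ ≤ ENNReal.ofReal ((2 ^ k * R) ^ (-s)) *
            (C * ENNReal.ofReal ((2 ^ (k + 1) * R) ^ n)) := by
            gcongr; exact hμ _ (by positivity)
        _ = C * ENNReal.ofReal ((2 ^ k * R) ^ (-s) * (2 ^ (k + 1) * R) ^ n) := by
            rw [ENNReal.ofReal_mul (by positivity)]; ring
        _ = C * ENNReal.ofReal (2 ^ n * R ^ (n - s) * (2 ^ ((n : ℝ) - s)) ^ k) := by
            congr 2
            have h1 : (2 ^ (k + 1) * R) ^ n = 2 ^ n * (2 ^ k * R) ^ (n : ℝ) := by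
              rw [Real.rpow_natCast, ← mul_pow]; ring
            have h2 : ((2 : ℝ) ^ ((n : ℝ) - s)) ^ k = ((2 : ℝ) ^ k) ^ ((n : ℝ) - s) := by
              rw [← Real.rpow_natCast, ← Real.rpow_natCast, ← Real.rpow_mul two_pos.le,
                ← Real.rpow_mul two_pos.le, mul_comm]
            rw [h1, h2, mul_left_comm, ← Real.rpow_add (by positivity), neg_add_eq_sub,
              Real.mul_rpow (by positivity) hR.le]
            ring
        _ = _ := by
            rw [ENNReal.ofReal_mul (by positivity), ENNReal.ofReal_mul (by positivity),
              ENNReal.ofReal_pow (by positivity), ENNReal.ofReal_pow (by positivity),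
              ENNReal.ofReal_ofNat]
            ring
    _ = _ := by
      rw [ENNReal.tsum_mul_left, ENNReal.tsum_geometric, ENNReal.coe_mul, ENNReal.coe_mul,
        ENNReal.coe_toNNReal hfin, ENNReal.coe_pow, ENNReal.coe_ofNat]
      ring

/-- Schur-type estimate: a bound for the kernel integrated in the first variable controls
the double integral against a finite weighted measure. -/
lemma lintegral_lintegral_mul_le_of_kernel_le {X Y : Type*} [MeasurableSpace X]
    [MeasurableSpace Y] {μ : Measure X} [SFinite μ] {τ : Measure Y} {k : X → Y → ℝ≥0∞}
    (hk : Measurable (Function.uncurry k)) {w : Y → ℝ≥0∞} (hw : Measurable w)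
    (hwτ : ∫⁻ y, w y ∂τ ≠ ∞) {M : ℝ≥0∞} (hM : ∀ y, ∫⁻ x, k x y ∂μ ≤ M) :
    ∫⁻ x, ∫⁻ y, w y * k x y ∂τ ∂μ ≤ M * ∫⁻ y, w y ∂τ := by
  have := isFiniteMeasure_withDensity hwτ
  calc _ = ∫⁻ x, ∫⁻ y, k x y ∂(τ.withDensity w) ∂μ := by
        refine lintegral_congr fun x => ?_
        rw [lintegral_withDensity_eq_lintegral_mul _ hw (g := k x)
          (hk.comp measurable_prodMk_left)]
        rfl
    _ = ∫⁻ y, ∫⁻ x, k x y ∂μ ∂(τ.withDensity w) := lintegral_lintegral_swap hk.aemeasurable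
    _ ≤ ∫⁻ _, M ∂(τ.withDensity w) := lintegral_mono hM
    _ = _ := by rw [lintegral_const, withDensity_apply _ MeasurableSet.univ, Measure.restrict_univ]

theorem stmt9 {N : ℕ} (hN : 3 ≤ N) (Ω : Set (EuclideanSpace ℝ (Fin N)))
    (hΩo : IsOpen Ω) (hΩb : Bornology.IsBounded Ω) (hΩ2 : HasC2Boundary Ω)
    (a : ℝ) (ha : 2 ≤ a)
    (α αs : ℝ) (hα : 0 < α - 1/2) (hαs : α - 1/2 < αs) (hαs' : αs ≤ α)
    (Φ : EuclideanSpace ℝ (Fin N) → ℝ)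
    (G : EuclideanSpace ℝ (Fin N) → EuclideanSpace ℝ (Fin N) → ℝ)
    (hΦm : Measurable Φ) (hΦpos : ∀ x ∈ Ω, 0 < Φ x)
    (hGm : Measurable (Function.uncurry G))
    (hGpos : ∀ x ∈ Ω, ∀ y ∈ Ω, x ≠ y → 0 < G x y)
    (c₀ β₁ : ℝ) (hc₀ : 1 ≤ c₀) (hβ₁ : 0 < β₁)
    -- upper estimate of `Φ(x) G(x,y)` for `x ∈ Σ_β`, `|x-y| ≥ aβ`
    (hG : ∀ β ∈ Set.Ioo (0:ℝ) β₁, ∀ x ∈ Ω, Metric.infDist x (frontier Ω) = β →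
      ∀ y ∈ Ω, a * β ≤ dist x y →
        Φ x * G x y ≤ c₀ * β ^ (2 * αs) * dist x y ^ ((2:ℝ) - N - 2 * α) * Φ y) :
    ∃ C : ℝ, 0 < C ∧ ∃ β₂ : ℝ, 0 < β₂ ∧ β₂ ≤ β₁ ∧
      ∀ τ : Measure (EuclideanSpace ℝ (Fin N)), τ Ωᶜ = 0 →
        (∫⁻ x in Ω, ENNReal.ofReal (Φ x) ∂τ) < ⊤ →
        ∀ β ∈ Set.Ioo (0:ℝ) β₂,
          ENNReal.ofReal (β ^ (-(2 * (αs - α) + 1))) *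
              (∫⁻ x in {x ∈ Ω | Metric.infDist x (frontier Ω) = β},
                ENNReal.ofReal (Φ x) *
                  (∫⁻ y in {y ∈ Ω | a * β ≤ dist x y},
                    ENNReal.ofReal (G x y) ∂τ) ∂(μH[(N:ℝ) - 1])) ≤
            ENNReal.ofReal C * (∫⁻ y in Ω, ENNReal.ofReal (Φ y) ∂τ) := by
  obtain ⟨n, rfl⟩ : ∃ n, N = n + 1 := ⟨N - 1, by omega⟩
  have hn : (((n + 1 : ℕ) : ℝ) - 1) = n := by push_cast; ring
  simp only [hn]
  obtain ⟨C, ρ, hρ, hC⟩ := exists_hausdorffMeasure_level_inter_closedBall_le hΩo hΩb hΩ2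
  set s : ℝ := n - 1 + 2 * α with hs
  obtain ⟨C', hC'⟩ := exists_setLIntegral_dist_rpow_le (X := EuclideanSpace ℝ (Fin (n + 1)))
    n (s := s) (by linarith) C
  refine ⟨c₀ * C' + 1, by positivity, min ρ β₁, lt_min hρ hβ₁, min_le_right _ _, ?_⟩
  intro τ _ hτ β hβ
  have hβ0 : 0 < β := hβ.1
  have hβρ : β < ρ := hβ.2.trans_le (min_le_left _ _)
  have hββ₁ : β < β₁ := hβ.2.trans_le (min_le_right _ _)
  have haβ : 0 < a * β := by positivity
  set S : Set (EuclideanSpace ℝ (Fin (n + 1))) := {x ∈ Ω | infDist x (frontier Ω) = β} with hS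
  have hSm : MeasurableSet S := hΩo.measurableSet.inter
    (measurableSet_eq_fun (continuous_infDist_pt _).measurable measurable_const)
  have hgrowth : ∀ y, ∀ r : ℝ, 0 ≤ r →
      (μH[(n : ℝ)].restrict S) (closedBall y r) ≤ C * ENNReal.ofReal (r ^ n) := fun y r hr => by
    rw [Measure.restrict_apply measurableSet_closedBall, inter_comm]
    exact hC β ⟨hβ0, hβρ⟩ y r hr
  have hfin : IsFiniteMeasure
      ((μH[(n : ℝ)] : Measure (EuclideanSpace ℝ (Fin (n + 1)))).restrict S) := by
    obtain ⟨r, hr⟩ := hΩb.subset_closedBall 0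
    have hr0 : S ⊆ closedBall 0 |r| := fun x hx =>
      closedBall_subset_closedBall (le_abs_self r) (hr hx.1)
    refine ⟨?_⟩
    rw [Measure.restrict_apply_univ, ← inter_eq_left.2 hr0]
    refine (hC β ⟨hβ0, hβρ⟩ 0 |r| (abs_nonneg r)).trans_lt ?_
    exact ENNReal.mul_lt_top ENNReal.coe_lt_top ENNReal.ofReal_lt_top
  set k : EuclideanSpace ℝ (Fin (n + 1)) → EuclideanSpace ℝ (Fin (n + 1)) → ℝ≥0∞ := fun x y =>
    {x | a * β ≤ dist x y}.indicator (fun x => ENNReal.ofReal (dist x y ^ (-s))) x with hk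
  have hkm : Measurable (Function.uncurry k) := by
    have : Function.uncurry k = {z | a * β ≤ dist z.1 z.2}.indicator
        (fun z => ENNReal.ofReal (dist z.1 z.2 ^ (-s))) := by
      ext ⟨x, y⟩
      simp [hk, indicator]
    rw [this]
    exact ((measurable_dist.pow_const _).ennreal_ofReal).indicator
      (measurableSet_le measurable_const measurable_dist)
  have hpt : ∀ x ∈ S, ENNReal.ofReal (Φ x) *
      (∫⁻ y in {y ∈ Ω | a * β ≤ dist x y}, ENNReal.ofReal (G x y) ∂τ) ≤
      ENNReal.ofReal (c₀ * β ^ (2 * αs)) * ∫⁻ y in Ω, ENNReal.ofReal (Φ y) * k x y ∂τ := by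
    intro x hx
    have hT : MeasurableSet {y ∈ Ω | a * β ≤ dist x y} := hΩo.measurableSet.inter
      (measurableSet_le measurable_const (measurable_const.dist measurable_id))
    rw [← lintegral_const_mul' _ _ ENNReal.ofReal_ne_top,
      ← lintegral_const_mul' _ _ ENNReal.ofReal_ne_top]
    refine (setLIntegral_mono' hT fun y hy => ?_).trans
      (lintegral_mono_set fun y hy => hy.1)
    have hky : k x y = ENNReal.ofReal (dist x y ^ (-s)) :=
      indicator_of_mem (show x ∈ {x | a * β ≤ dist x y} from hy.2) _
    have hexp : (2 : ℝ) - ((n + 1 : ℕ) : ℝ) - 2 * α = -s := by rw [hs]; push_cast; ring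
    have hb := hG β ⟨hβ0, hββ₁⟩ x hx.1 hx.2 y hy.1 hy.2
    rw [hexp] at hb
    rw [hky, ← ENNReal.ofReal_mul (hΦpos x hx.1).le, ← ENNReal.ofReal_mul (hΦpos y hy.1).le,
      ← ENNReal.ofReal_mul (by positivity)]
    refine ENNReal.ofReal_le_ofReal (hb.trans_eq ?_)
    ring
  have hkernel : ∀ y, ∫⁻ x, k x y ∂(μH[(n : ℝ)].restrict S) ≤
      C' * ENNReal.ofReal (β ^ (1 - 2 * α)) := fun y => by
    refine (hC' _ y (hgrowth y) (a * β) haβ).trans ?_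
    gcongr
    rw [show (n : ℝ) - s = 1 - 2 * α by rw [hs]; ring]
    exact Real.rpow_le_rpow_of_nonpos hβ0 (by nlinarith) (by linarith)
  have hpow : β ^ (-(2 * (αs - α) + 1)) * (c₀ * β ^ (2 * αs)) * β ^ (1 - 2 * α) = c₀ := by
    rw [mul_left_comm, mul_assoc, ← Real.rpow_add hβ0, ← Real.rpow_add hβ0]
    ring_nf
    simp
  calc _ ≤ ENNReal.ofReal (β ^ (-(2 * (αs - α) + 1))) * ∫⁻ x in S,
          ENNReal.ofReal (c₀ * β ^ (2 * αs)) *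
            ∫⁻ y in Ω, ENNReal.ofReal (Φ y) * k x y ∂τ ∂μH[(n : ℝ)] := by
        exact mul_le_mul_right (setLIntegral_mono' hSm hpt) _
    _ ≤ ENNReal.ofReal (β ^ (-(2 * (αs - α) + 1))) * (ENNReal.ofReal (c₀ * β ^ (2 * αs)) *
          (C' * ENNReal.ofReal (β ^ (1 - 2 * α)) * ∫⁻ y in Ω, ENNReal.ofReal (Φ y) ∂τ)) := by
        rw [lintegral_const_mul' _ _ ENNReal.ofReal_ne_top]
        gcongr
        exact lintegral_lintegral_mul_le_of_kernel_le hkm hΦm.ennreal_ofReal hτ.ne hkernel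
    _ = ENNReal.ofReal (c₀ * C') * ∫⁻ y in Ω, ENNReal.ofReal (Φ y) ∂τ := by
        have hpow' := congrArg ENNReal.ofReal hpow
        rw [ENNReal.ofReal_mul (by positivity), ENNReal.ofReal_mul (by positivity)] at hpow'
        rw [ENNReal.ofReal_mul (p := c₀) (q := C') (by positivity), ENNReal.ofReal_coe_nnreal,
          ← hpow']
        ring
    _ ≤ _ := by
        gcongr
        linarith
end

section
/- Let Ω ⊂ ℝ^N (N ≥ 3) be a bounded open set with C² boundary and δ(x) := dist(x, ∂Ω). For every a ≥ 1 there exist constants c > 0 and β₀ > 0 (depending on Ω and a) such that for every β ∈ (0,β₀) and every y ∈ ℝ^N: ∫_{Σ_β ∩ {x : |x−y| < aβ}} |x−y|^{2−N} dH^{N−1}(x) ≤ c β. -/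
open MeasureTheory Metric Set

open scoped ENNReal NNReal Topology

lemma nonpos_of_mem_closure_of_sublevel {X : Type*} [TopologicalSpace X] {Ω U : Set X}
    {f : X → ℝ} (hU : IsOpen U) (hf : ContinuousOn f U) (hΩU : Ω ∩ U = {x ∈ U | f x < 0}) {z : X}
    (hz : z ∈ closure Ω) (hzU : z ∈ U) : f z ≤ 0 := by
  by_contra! hpos
  have h1 : ∀ᶠ w in 𝓝 z, 0 < f w :=
    (hf.continuousAt (hU.mem_nhds hzU)).eventually (lt_mem_nhds hpos)
  obtain ⟨w, hwΩ, hw, hwU⟩ :=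
    ((mem_closure_iff_frequently.1 hz).and_eventually (h1.and (hU.mem_nhds hzU))).exists
  have : w ∈ {x ∈ U | f x < 0} := hΩU ▸ ⟨hwΩ, hwU⟩
  exact lt_asymm hw this.2

section LevelSets

variable {E : Type*} [NormedAddCommGroup E] [NormedSpace ℝ E]

/-- The closed ball around a point of an open set whose radius is the distance to the frontier
lies in the closure of the set. -/
lemma closedBall_infDist_frontier_subset_closure {Ω : Set E} (hΩ : IsOpen Ω) {x : E}
    (hx : x ∈ Ω) (hpos : 0 < infDist x (frontier Ω)) :
    closedBall x (infDist x (frontier Ω)) ⊆ closure Ω := by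
  rw [← closure_ball x hpos.ne']
  refine closure_mono ?_
  refine (convex_ball x _).isPreconnected.subset_left_of_subset_union hΩ
    isClosed_closure.isOpen_compl (disjoint_compl_right.mono_left subset_closure) ?_
    ⟨x, mem_ball_self hpos, hx⟩
  intro z hz
  by_cases hzc : z ∈ closure Ω
  · left
    by_contra hzΩ
    have hzf : z ∈ frontier Ω := by
      rw [hΩ.frontier_eq]
      exact ⟨hzc, hzΩ⟩
    have := infDist_le_dist_of_mem (x := x) hzf
    rw [mem_ball, dist_comm] at hz
    linarith
  · exact Or.inr hzc

/-- Near a boundary point at which `Ω` is a strict sublevel set of a strictly differentiable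
function, the level sets of the distance to the frontier are almost tangent to the kernel of the
derivative. -/
lemma exists_abs_le_on_infDist_frontier_level [ProperSpace E] {Ω U : Set E} {f : E → ℝ}
    {p : E} {ℓ : E →L[ℝ] ℝ} (hΩ : IsOpen Ω) (hp : p ∈ frontier Ω) (hU : IsOpen U) (hpU : p ∈ U)
    (hf : ContinuousOn f U) (hfp : HasStrictFDerivAt f ℓ p)
    (hΩU : Ω ∩ U = {x ∈ U | f x < 0}) {ε : ℝ} (hε : 0 < ε) :
    ∃ ρ > 0, ∀ β ∈ Ioo (0 : ℝ) ρ,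
      ∀ x ∈ {x ∈ Ω | infDist x (frontier Ω) = β} ∩ ball p ρ,
      ∀ x' ∈ {x ∈ Ω | infDist x (frontier Ω) = β} ∩ ball p ρ,
        |ℓ (x' - x)| ≤ ε * ‖x' - x‖ := by
  have h1 := hfp.isLittleO.bound hε
  obtain ⟨r₁, hr₁, hball⟩ := Metric.eventually_nhds_iff_ball.1
    (h1.and ((hU.prod hU).mem_nhds (show (p, p) ∈ U ×ˢ U from ⟨hpU, hpU⟩)))
  have key : ∀ z ∈ ball p r₁, ∀ z' ∈ ball p r₁,
      |f z' - f z - ℓ (z' - z)| ≤ ε * ‖z' - z‖ ∧ z' ∈ U ∧ z ∈ U := by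
    intro z hz z' hz'
    have := hball (z', z) (by rw [← ball_prod_same]; exact ⟨hz', hz⟩)
    exact ⟨by simpa using this.1, this.2.1, this.2.2⟩
  refine ⟨r₁ / 2, by positivity, ?_⟩
  rintro β ⟨hβ, hβr⟩
  have oneSided : ∀ x ∈ {x ∈ Ω | infDist x (frontier Ω) = β} ∩ ball p (r₁ / 2),
      ∀ x' ∈ {x ∈ Ω | infDist x (frontier Ω) = β} ∩ ball p (r₁ / 2),
        -(ε * ‖x' - x‖) ≤ ℓ (x' - x) := by
    rintro x ⟨⟨hxΩ, hxβ⟩, hxp⟩ x' ⟨⟨-, hxβ'⟩, hxp'⟩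
    by_contra! hlt
    obtain ⟨q, hq, hqd⟩ := isClosed_frontier.exists_infDist_eq_dist ⟨p, hp⟩ x'
    have hqx : dist x' q = β := by rw [← hqd, hxβ']
    have hz : dist (q - (x' - x)) x = β := by
      rw [← hqx, dist_comm x' q, dist_eq_norm, dist_eq_norm]
      congr 1
      abel
    have hzc : q - (x' - x) ∈ closure Ω := by
      refine closedBall_infDist_frontier_subset_closure hΩ hxΩ (hxβ ▸ hβ) ?_
      rw [mem_closedBall, hxβ, hz]
    rw [mem_ball] at hxp hxp'
    have hzp : q - (x' - x) ∈ ball p r₁ := by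
      rw [mem_ball]
      linarith [dist_triangle (q - (x' - x)) x p]
    have hqp : q ∈ ball p r₁ := by
      rw [mem_ball]
      linarith [dist_triangle q x' p, dist_comm q x']
    obtain ⟨hest, hqU, hzU⟩ := key _ hzp _ hqp
    have hfz := nonpos_of_mem_closure_of_sublevel hU hf hΩU hzc hzU
    rw [sub_sub_cancel] at hest
    have hfq : f q < 0 := by linarith [(abs_le.1 hest).2]
    have : q ∈ Ω ∩ U := hΩU ▸ ⟨hqU, hfq⟩
    rw [hΩ.frontier_eq] at hq
    exact hq.2 this.1
  intro x hx x' hx'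
  refine abs_le.2 ⟨oneSided x hx x' hx', ?_⟩
  have := oneSided x' hx' x hx
  rw [norm_sub_rev, ← neg_sub x' x, map_neg] at this
  linarith

end LevelSets

/-- A nonzero linear functional can be completed to linear coordinates by an `n`-dimensional
`1`-Lipschitz projection. -/
lemma exists_projection_antilipschitz {n : ℕ} (ℓ : EuclideanSpace ℝ (Fin (n + 1)) →L[ℝ] ℝ)
    (hℓ : ℓ ≠ 0) :
    ∃ (T : EuclideanSpace ℝ (Fin (n + 1)) →ₗ[ℝ] (Fin n → ℝ)) (K : ℝ), 0 < K ∧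
      (∀ w, ‖T w‖ ≤ ‖w‖) ∧ ∀ w, ‖w‖ ≤ K * max ‖T w‖ |ℓ w| := by
  obtain ⟨i, hi⟩ : ∃ i, ℓ (EuclideanSpace.single i 1) ≠ 0 := by
    by_contra! h
    refine hℓ (ContinuousLinearMap.coe_injective
      ((EuclideanSpace.basisFun (Fin (n + 1)) ℝ).toBasis.ext fun i => ?_))
    simpa using h i
  let T : EuclideanSpace ℝ (Fin (n + 1)) →ₗ[ℝ] (Fin n → ℝ) :=
    { toFun := fun w j => w (i.succAbove j)
      map_add' := fun _ _ => rfl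
      map_smul' := fun _ _ => rfl }
  have hinj : Function.Injective (T.prod ℓ.toLinearMap) := by
    rw [← LinearMap.ker_eq_bot, LinearMap.ker_eq_bot']
    intro w hw
    have hT : T w = 0 := congrArg Prod.fst hw
    have hl : ℓ w = 0 := congrArg Prod.snd hw
    have hwi : w = w i • EuclideanSpace.single i (1 : ℝ) := by
      ext j
      rcases Fin.eq_self_or_eq_succAbove i j with rfl | ⟨k, rfl⟩
      · simp
      · have hk : w (i.succAbove k) = 0 := congrFun hT k
        simp [hk]
    rw [hwi, map_smul, smul_eq_mul] at hl
    rw [hwi, (mul_eq_zero.1 hl).resolve_right hi, zero_smul]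
  obtain ⟨K, hK, hanti⟩ := (T.prod ℓ.toLinearMap).injective_iff_antilipschitz.1 hinj
  refine ⟨T, K, hK, fun w => ?_, fun w => ?_⟩
  · exact (pi_norm_le_iff_of_nonneg (norm_nonneg _)).2 fun j =>
      PiLp.norm_apply_le w (i.succAbove j)
  · simpa [Prod.norm_def] using ZeroHomClass.bound_of_antilipschitz _ hanti w

/-- A set that projects bi-Lipschitzly to `ℝⁿ` has at most `n`-dimensional growth. -/
lemma hausdorffMeasure_inter_closedBall_le {X : Type*} [MetricSpace X] [MeasurableSpace X]
    [BorelSpace X] {n : ℕ} {S : Set X} {T : X → Fin n → ℝ} {K : ℝ≥0}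
    (hT : ∀ x x', dist (T x) (T x') ≤ dist x x')
    (hK : ∀ x ∈ S, ∀ x' ∈ S, dist x x' ≤ K * dist (T x) (T x')) (y : X) {r : ℝ} (hr : 0 ≤ r) :
    μH[(n : ℝ)] (S ∩ closedBall y r) ≤ ENNReal.ofReal ((K * 2) ^ n * r ^ n) := by
  rcases isEmpty_or_nonempty X with hX | hX
  · rw [Set.eq_empty_of_isEmpty (S ∩ closedBall y r)]
    simp
  have hinj : InjOn T S := fun x hx x' hx' h => by
    have := hK x hx x' hx'
    rw [h, dist_self, mul_zero] at this
    exact dist_le_zero.1 this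
  have hlip : LipschitzOnWith K (Function.invFunOn T S) (T '' (S ∩ closedBall y r)) := by
    refine LipschitzOnWith.of_dist_le_mul ?_
    rintro _ ⟨x, hx, rfl⟩ _ ⟨x', hx', rfl⟩
    rw [hinj.leftInvOn_invFunOn hx.1, hinj.leftInvOn_invFunOn hx'.1]
    exact hK x hx.1 x' hx'.1
  have himage : Function.invFunOn T S '' (T '' (S ∩ closedBall y r)) = S ∩ closedBall y r :=
    (hinj.leftInvOn_invFunOn.mono inter_subset_left).image_image
  have hsub : T '' (S ∩ closedBall y r) ⊆ closedBall (T y) r := by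
    rintro _ ⟨x, hx, rfl⟩
    exact (hT x y).trans hx.2
  have hpi : (μH[(n : ℝ)] : Measure (Fin n → ℝ)) = volume := by
    simpa using hausdorffMeasure_pi_real (ι := Fin n)
  calc μH[(n : ℝ)] (S ∩ closedBall y r)
      ≤ (K : ℝ≥0∞) ^ (n : ℝ) * μH[(n : ℝ)] (T '' (S ∩ closedBall y r)) := by
        conv_lhs => rw [← himage]
        exact hlip.hausdorffMeasure_image_le (Nat.cast_nonneg n)
    _ ≤ (K : ℝ≥0∞) ^ (n : ℝ) * μH[(n : ℝ)] (closedBall (T y) r) := by gcongr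
    _ = ENNReal.ofReal ((K * 2) ^ n * r ^ n) := by
        rw [hpi, Real.volume_pi_closedBall _ hr, ENNReal.rpow_natCast, Fintype.card_fin,
          ← ENNReal.ofReal_coe_nnreal, ← ENNReal.ofReal_pow K.coe_nonneg,
          ← ENNReal.ofReal_mul (by positivity)]
        congr 1
        ring

/-- Near a boundary point, the level sets of the distance to the frontier of a `C²` domain have
`(N - 1)`-dimensional growth. -/
lemma exists_hausdorffMeasure_level_inter_ball_le {n : ℕ}
    {Ω : Set (EuclideanSpace ℝ (Fin (n + 1)))} (hΩ : IsOpen Ω) (hΩ2 : HasC2Boundary Ω)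
    {p : EuclideanSpace ℝ (Fin (n + 1))} (hp : p ∈ frontier Ω) :
    ∃ C > 0, ∃ ρ > 0, ∀ β ∈ Ioo (0 : ℝ) ρ, ∀ y, ∀ r ≥ 0,
      μH[(n : ℝ)] ({x ∈ Ω | infDist x (frontier Ω) = β} ∩ ball p ρ ∩ closedBall y r) ≤
        ENNReal.ofReal (C * r ^ n) := by
  obtain ⟨U, f, hU, hpU, hf, hdf, hΩU⟩ := hΩ2 p hp
  obtain ⟨T, K, hK, hT, hTK⟩ := exists_projection_antilipschitz _ (hdf p hpU)
  have hfp := (hf.contDiffAt (hU.mem_nhds hpU)).hasStrictFDerivAt two_ne_zero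
  obtain ⟨ρ, hρ, h⟩ := exists_abs_le_on_infDist_frontier_level hΩ hp hU hpU hf.continuousOn hfp
    hΩU (ε := (2 * K)⁻¹) (by positivity)
  refine ⟨(K * 2) ^ n, by positivity, ρ, hρ, fun β hβ y r hr => ?_⟩
  lift K to ℝ≥0 using hK.le
  refine hausdorffMeasure_inter_closedBall_le (T := T) (fun x x' => ?_) (fun x hx x' hx' => ?_) y hr
  · rw [dist_eq_norm, dist_eq_norm, ← map_sub]
    exact hT _
  · rw [dist_eq_norm, dist_eq_norm, ← map_sub]
    have h1 := h β hβ x' hx' x hx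
    have h2 := hTK (x - x')
    rcases max_cases ‖T (x - x')‖ |fderiv ℝ f p (x - x')| with hm | hm
    · rwa [hm.1] at h2
    · rw [hm.1] at h2
      have h3 : (K : ℝ) * |fderiv ℝ f p (x - x')| ≤ ‖x - x'‖ / 2 := by
        calc (K : ℝ) * |fderiv ℝ f p (x - x')| ≤ K * ((2 * (K : ℝ))⁻¹ * ‖x - x'‖) := by
              gcongr
          _ = ‖x - x'‖ / 2 := by field_simp
      have h4 : 0 ≤ (K : ℝ) * ‖T (x - x')‖ := by positivity
      linarith

/-- The growth bound for level sets near the frontier, with uniform constants. -/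
lemma exists_uniform_hausdorffMeasure_level_inter_ball_le {n : ℕ}
    {Ω : Set (EuclideanSpace ℝ (Fin (n + 1)))} (hΩ : IsOpen Ω) (hΩ2 : HasC2Boundary Ω)
    (hΩb : Bornology.IsBounded Ω) :
    ∃ C > 0, ∃ ρ > 0, ∀ q ∈ frontier Ω, ∀ β ∈ Ioo (0 : ℝ) ρ, ∀ y, ∀ r ≥ 0,
      μH[(n : ℝ)] ({x ∈ Ω | infDist x (frontier Ω) = β} ∩ ball q ρ ∩ closedBall y r) ≤
        ENNReal.ofReal (C * r ^ n) := by
  have hcomp : IsCompact (frontier Ω) :=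
    Metric.isCompact_of_isClosed_isBounded isClosed_frontier
      (hΩb.closure.subset frontier_subset_closure)
  refine hcomp.induction_on (p := fun s => ∃ C > 0, ∃ ρ > 0, ∀ q ∈ s,
    ∀ β ∈ Ioo (0 : ℝ) ρ, ∀ y, ∀ r ≥ 0,
      μH[(n : ℝ)] ({x ∈ Ω | infDist x (frontier Ω) = β} ∩ ball q ρ ∩ closedBall y r) ≤
        ENNReal.ofReal (C * r ^ n)) ?_ ?_ ?_ ?_
  · exact ⟨1, one_pos, 1, one_pos, fun q hq => hq.elim⟩
  · rintro s t hst ⟨C, hC, ρ, hρ, h⟩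
    exact ⟨C, hC, ρ, hρ, fun q hq => h q (hst hq)⟩
  · rintro s t ⟨C, hC, ρ, hρ, h⟩ ⟨C', hC', ρ', hρ', h'⟩
    refine ⟨max C C', lt_max_of_lt_left hC, min ρ ρ', lt_min hρ hρ', ?_⟩
    rintro q (hq | hq) β hβ y r hr
    · refine (measure_mono ?_).trans ((h q hq β ⟨hβ.1, hβ.2.trans_le (min_le_left _ _)⟩ y r
        hr).trans ?_)
      · gcongr
        exact min_le_left _ _
      · gcongr
        exact le_max_left _ _
    · refine (measure_mono ?_).trans ((h' q hq β ⟨hβ.1, hβ.2.trans_le (min_le_right _ _)⟩ y r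
        hr).trans ?_)
      · gcongr
        exact min_le_right _ _
      · gcongr
        exact le_max_right _ _
  · intro p hp
    obtain ⟨C, hC, ρ, hρ, h⟩ := exists_hausdorffMeasure_level_inter_ball_le hΩ hΩ2 hp
    refine ⟨ball p (ρ / 2), mem_nhdsWithin_of_mem_nhds (ball_mem_nhds p (by positivity)), C, hC,
      ρ / 2, by positivity, fun q hq β hβ y r hr => ?_⟩
    refine (measure_mono ?_).trans (h β ⟨hβ.1, hβ.2.trans (half_lt_self hρ)⟩ y r hr)
    gcongr
    refine ball_subset_ball' ?_
    rw [mem_ball] at hq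
    linarith

/-- If `μ` has `n`-dimensional growth around `y` on `S`, then `dist x y ^ (1 - n)` has integral
over `S` controlled by the size of `S`. -/
lemma lintegral_dist_rpow_le {X : Type*} [MetricSpace X] [MeasurableSpace X] [BorelSpace X]
    {μ : Measure X} {n : ℕ} (hn : 2 ≤ n) {S : Set X} (hS : MeasurableSet S) {y : X} {C R : ℝ}
    (hC : 0 ≤ C) (hR : 0 < R) (hSR : S ⊆ ball y R)
    (hμ : ∀ r ≥ 0, μ (S ∩ closedBall y r) ≤ ENNReal.ofReal (C * r ^ n)) :
    ∫⁻ x in S, ENNReal.ofReal (dist x y ^ ((1 : ℝ) - n)) ∂μ ≤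
      ENNReal.ofReal (2 ^ n * C * R) := by
  have hn' : (1 : ℝ) - n < 0 := by
    have : (2 : ℝ) ≤ n := by exact_mod_cast hn
    linarith
  let g : ℕ → X → ℝ≥0∞ := fun k => (closedBall y ((1 / 2) ^ k * R)).indicator
    fun _ => ENNReal.ofReal (((1 / 2) ^ (k + 1) * R) ^ ((1 : ℝ) - n))
  have hpt : ∀ x ∈ S, ENNReal.ofReal (dist x y ^ ((1 : ℝ) - n)) ≤ ∑' k, g k x := by
    intro x hx
    rcases (dist_nonneg (x := x) (y := y)).eq_or_lt with h0 | h0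
    · simp [← h0, Real.zero_rpow hn'.ne]
    · have hlt : dist x y < R := hSR hx
      obtain ⟨k, hk1, hk2⟩ := exists_nat_pow_near_of_lt_one (div_pos h0 hR)
        ((div_le_one hR).2 hlt.le) (by norm_num : (0 : ℝ) < 1 / 2) (by norm_num)
      rw [lt_div_iff₀ hR] at hk1
      rw [div_le_iff₀ hR] at hk2
      refine le_trans ?_ (ENNReal.le_tsum k)
      simp only [g]
      rw [indicator_of_mem (mem_closedBall.2 hk2)]
      exact ENNReal.ofReal_le_ofReal
        (Real.rpow_le_rpow_of_nonpos (by positivity) hk1.le hn'.le)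
  have hterm : ∀ k, ∫⁻ x in S, g k x ∂μ ≤ ENNReal.ofReal (2 ^ n * C * R * (1 / 2 / 2 ^ k)) := by
    intro k
    have hcalc : ((1 / 2 : ℝ) ^ (k + 1) * R) ^ ((1 : ℝ) - n) * (C * ((1 / 2) ^ k * R) ^ n) =
        2 ^ n * C * R * (1 / 2 / 2 ^ k) := by
      rw [Real.rpow_sub (by positivity), Real.rpow_one, Real.rpow_natCast, pow_succ]
      simp only [mul_pow, div_pow, one_pow]
      field_simp
    calc ∫⁻ x in S, g k x ∂μ
        = ENNReal.ofReal (((1 / 2) ^ (k + 1) * R) ^ ((1 : ℝ) - n)) *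
            μ (S ∩ closedBall y ((1 / 2) ^ k * R)) := by
          rw [lintegral_indicator_const isClosed_closedBall.measurableSet,
            Measure.restrict_apply isClosed_closedBall.measurableSet, inter_comm]
      _ ≤ ENNReal.ofReal (((1 / 2) ^ (k + 1) * R) ^ ((1 : ℝ) - n)) *
            ENNReal.ofReal (C * ((1 / 2) ^ k * R) ^ n) := by
          gcongr
          exact hμ _ (by positivity)
      _ = _ := by
          rw [← ENNReal.ofReal_mul (by positivity), hcalc]
  have hsum : HasSum (fun k : ℕ => 2 ^ n * C * R * (1 / 2 / 2 ^ k)) (2 ^ n * C * R) := by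
    simpa using (hasSum_geometric_two' 1).mul_left (2 ^ n * C * R)
  calc ∫⁻ x in S, ENNReal.ofReal (dist x y ^ ((1 : ℝ) - n)) ∂μ
      ≤ ∫⁻ x in S, ∑' k, g k x ∂μ := setLIntegral_mono' hS hpt
    _ = ∑' k, ∫⁻ x in S, g k x ∂μ := lintegral_tsum fun k =>
        (measurable_const.indicator isClosed_closedBall.measurableSet).aemeasurable
    _ ≤ ∑' k, ENNReal.ofReal (2 ^ n * C * R * (1 / 2 / 2 ^ k)) := ENNReal.tsum_le_tsum hterm
    _ = ENNReal.ofReal (2 ^ n * C * R) := by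
        rw [← ENNReal.ofReal_tsum_of_nonneg (fun k => by positivity) hsum.summable, hsum.tsum_eq]


theorem stmt13 {N : ℕ} (hN : 3 ≤ N) (Ω : Set (EuclideanSpace ℝ (Fin N)))
    (hΩo : IsOpen Ω) (hΩb : Bornology.IsBounded Ω) (hΩ2 : HasC2Boundary Ω)
    (a : ℝ) (ha : 1 ≤ a) :
    ∃ c : ℝ, 0 < c ∧ ∃ β₀ : ℝ, 0 < β₀ ∧
      ∀ β ∈ Set.Ioo (0:ℝ) β₀, ∀ y : EuclideanSpace ℝ (Fin N),
        (∫⁻ x in {x ∈ Ω | Metric.infDist x (frontier Ω) = β} ∩ {x | dist x y < a * β},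
          ENNReal.ofReal (dist x y ^ ((2:ℝ) - N)) ∂(μH[(N:ℝ) - 1])) ≤
        ENNReal.ofReal (c * β) := by
  obtain ⟨n, rfl⟩ : ∃ n, N = n + 1 := ⟨N - 1, by omega⟩
  have hdim : ((n + 1 : ℕ) : ℝ) - 1 = n := by push_cast; ring
  have hexp : (2 : ℝ) - (n + 1 : ℕ) = 1 - n := by push_cast; ring
  rw [hdim, hexp]
  obtain ⟨C, hC, ρ, hρ, h⟩ := exists_uniform_hausdorffMeasure_level_inter_ball_le hΩo hΩ2 hΩb
  have ha0 : 0 < a := by linarith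
  refine ⟨2 ^ n * C * a, by positivity, ρ / (3 * a), by positivity, fun β hβ y => ?_⟩
  have hβ0 : 0 < β := hβ.1
  have hβρ : β * (3 * a) < ρ := (lt_div_iff₀ (by positivity)).1 hβ.2
  have hβa : β ≤ a * β := le_mul_of_one_le_left hβ0.le ha
  have hmeas : MeasurableSet
      ({x ∈ Ω | infDist x (frontier Ω) = β} ∩ {x | dist x y < a * β}) :=
    (hΩo.measurableSet.inter ((isClosed_singleton (x := β)).preimage
      (continuous_infDist_pt (frontier Ω))).measurableSet).inter isOpen_ball.measurableSet
  rw [mul_assoc]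
  refine lintegral_dist_rpow_le (by omega) hmeas hC.le (by positivity) inter_subset_right ?_
  intro r hr
  rcases ({x ∈ Ω | infDist x (frontier Ω) = β} ∩ {x | dist x y < a * β}).eq_empty_or_nonempty
    with hempty | ⟨x, ⟨-, hxβ⟩, hxy⟩
  · simp [hempty]
  have hne : (frontier Ω).Nonempty := by
    by_contra hemp
    rw [not_nonempty_iff_eq_empty.1 hemp, infDist_empty] at hxβ
    exact hβ0.ne hxβ
  obtain ⟨q, hq, hqd⟩ := isClosed_frontier.exists_infDist_eq_dist hne x
  refine (measure_mono ?_).trans (h q hq β ⟨hβ0, by nlinarith⟩ y r hr)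
  refine inter_subset_inter_left _ fun z hz => ⟨hz.1, ?_⟩
  have hzy : dist z y < a * β := hz.2
  have hxy' : dist x y < a * β := hxy
  rw [mem_ball]
  linarith [dist_triangle z y q, dist_triangle y x q, dist_comm x y]
end
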